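/- arXiv:2106.11734 — 2 statements merged into one kernel-verified Lean document; each statement's English description precedes it below -/
import Mathlib

section
/- Let b > β > 0 and let f : 𝔻 → ℝ be defined by f(r·e^{iθ}) = (1/(r(1−r)^{b−β}))·sin(1/(1−r)^b) for 1/2 ≤ r < 1 and f(r·e^{iθ}) = 1 for 0 ≤ r < 1/2. Then there exist r₀ ∈ (0,1) and a constant C > 0 such that for every z = r·e^{iθ} ∈ 𝔻 with r ≥ r₀, the mean oscillation satisfies (1/|D(z,1)|)∫_{D(z,1)} |f(ξ) − f̂₁(z)| dA(ξ) ≥ C·(1−r)^{β−b}. In particular sup_{z∈𝔻} (1/|D(z,1)|)∫_{D(z,1)} |f − f̂₁(z)| dA = ∞, i.e. f does not belong to BMO¹. -/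
open MeasureTheory Set

noncomputable section

/-- The normalized area measure on the plane: planar Lebesgue measure divided by `π`. -/
def dA : Measure ℂ := (ENNReal.ofReal Real.pi)⁻¹ • volume

/-- The open unit disc `𝔻`. -/
def unitDisc : Set ℂ := {z : ℂ | ‖z‖ < 1}

/-- The argument `θ` of `z`, normalized to lie in `[0, 2π)`. -/
def theta (z : ℂ) : ℝ := toIcoMod Real.two_pi_pos 0 (Complex.arg z)

/-- The angle of `ζ`, normalized to lie in `[theta z, theta z + 2π)`;
for `ζ ∈ B(z)` this is the angle `θ̃ ∈ [θ, θ + π(1-r)]` of the paper's convention. -/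
def angFrom (z ζ : ℂ) : ℝ := toIcoMod Real.two_pi_pos (theta z) (Complex.arg ζ)

/-- The polar rectangle `{ρ e^{iφ} : r₁ ≤ ρ ≤ r₂, φ₁ ≤ φ ≤ φ₂}`. -/
def polarRect (r₁ r₂ φ₁ φ₂ : ℝ) : Set ℂ :=
  {w : ℂ | ∃ ρ φ : ℝ, r₁ ≤ ρ ∧ ρ ≤ r₂ ∧ φ₁ ≤ φ ∧ φ ≤ φ₂ ∧
    w = (ρ : ℂ) * Complex.exp ((φ : ℂ) * Complex.I)}

/-- The set `B(z)` for `z = r e^{iθ} ∈ 𝔻`. -/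
def Bz (z : ℂ) : Set ℂ :=
  polarRect ‖z‖ (1 - (1 - ‖z‖) / 2) (theta z) (theta z + Real.pi * (1 - ‖z‖))

/-- The set `B(z, ζ)` for `ζ ∈ B(z)`. -/
def Bzz (z ζ : ℂ) : Set ℂ := polarRect ‖z‖ ‖ζ‖ (theta z) (angFrom z ζ)

/-- The set `B(ζ₁, ζ₂)` for points `ζ₁ ≾ ζ₂` of `B(z)`. -/
def Bsub (z ζ₁ ζ₂ : ℂ) : Set ℂ := polarRect ‖ζ₁‖ ‖ζ₂‖ (angFrom z ζ₁) (angFrom z ζ₂)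

/-- The relation `ζ₁ ≾ ζ₂` for points of `B(z)`: `ρ₁ ≤ ρ₂` and `φ₁ ≤ φ₂`. -/
def precSim (z ζ₁ ζ₂ : ℂ) : Prop := ‖ζ₁‖ ≤ ‖ζ₂‖ ∧ angFrom z ζ₁ ≤ angFrom z ζ₂

/-- The average `f̂_K = (1/|K|) ∫_K f dA` of `f` over a set `K`. -/
def avgOn (f : ℂ → ℂ) (K : Set ℂ) : ℂ := ((dA K).toReal)⁻¹ • ∫ w in K, f w ∂dA

/-- The average function `f̂(z) = f̂_{B(z)}`. -/
def avg (f : ℂ → ℂ) (z : ℂ) : ℂ := avgOn f (Bz z)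

/-- The quantity `(1/|B(z)|) |∫_{B(z,ζ)} (f(ξ) - f̂(z)) dA(ξ)|`. -/
def wQuot (f : ℂ → ℂ) (z ζ : ℂ) : ℝ :=
  ((dA (Bz z)).toReal)⁻¹ * ‖∫ ξ in Bzz z ζ, (f ξ - avg f z) ∂dA‖

/-- The BWMO condition: `‖f‖_BWMO < ∞`. -/
def IsBWMO (f : ℂ → ℂ) : Prop := ∃ C : ℝ, ∀ z ∈ unitDisc, ∀ ζ ∈ Bz z, wQuot f z ζ ≤ C

/-- The BWMO seminorm `‖f‖_BWMO`. -/
def bwmoNorm (f : ℂ → ℂ) : ℝ :=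
  sSup {c : ℝ | ∃ z ∈ unitDisc, ∃ ζ ∈ Bz z, c = wQuot f z ζ}

/-- The VWMO condition:
`(1/|B(z)|) sup_{ζ ∈ B(z)} |∫_{B(z,ζ)} (f - f̂(z)) dA| → 0` as `|z| → 1`. -/
def IsVWMO (f : ℂ → ℂ) : Prop :=
  ∀ ε > (0:ℝ), ∃ r₀ < (1:ℝ), ∀ z ∈ unitDisc, r₀ ≤ ‖z‖ → ∀ ζ ∈ Bz z, wQuot f z ζ ≤ ε

/-- The Bergman-metric disc `D(z,1)` of radius `1` centered at `z`. -/
def Dball (z : ℂ) : Set ℂ :=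
  {w : ℂ | ‖w‖ < 1 ∧ ‖(z - w) / (1 - (starRingEnd ℂ) w * z)‖ < Real.tanh 1}

/-- The hyperbolic average `f̂₁(z) = (1/|D(z,1)|) ∫_{D(z,1)} f dA` of a real-valued `f`. -/
def avg1 (f : ℂ → ℝ) (z : ℂ) : ℝ := ((dA (Dball z)).toReal)⁻¹ * ∫ w in Dball z, f w ∂dA

/-- The mean oscillation `(1/|D(z,1)|) ∫_{D(z,1)} |f - f̂₁(z)| dA` of a real-valued `f`. -/
def meanOsc1 (f : ℂ → ℝ) (z : ℂ) : ℝ :=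
  ((dA (Dball z)).toReal)⁻¹ * ∫ ξ in Dball z, |f ξ - avg1 f z| ∂dA

/-- The Berezin transform `f̃(z) = ∫_𝔻 f(w) |k_z(w)|² dA(w)`,
where `k_z(w) = (1-|z|²)/(1-w z̄)²`. -/
def berezin (f : ℂ → ℂ) (z : ℂ) : ℂ :=
  ∫ w in unitDisc, f w * ((((1 - ‖z‖ ^ 2) ^ 2 / ‖1 - w * (starRingEnd ℂ) z‖ ^ 4 : ℝ)) : ℂ) ∂dA

/-- The example symbol of Section 4:
`f(r e^{iθ}) = (1/(r (1-r)^{b-β})) sin(1/(1-r)^b)` for `r ≥ 1/2`, and `1` for `r < 1/2`. -/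
def fEx (b β : ℝ) (z : ℂ) : ℝ :=
  if ‖z‖ < 1 / 2 then 1
  else (1 / (‖z‖ * (1 - ‖z‖) ^ (b - β))) * Real.sin (1 / (1 - ‖z‖) ^ b)

end

lemma half_lt_tanh_one : (1/2 : ℝ) < Real.tanh 1 := by
  rw [Real.tanh_eq_sinh_div_cosh, Real.sinh_eq, Real.cosh_eq]
  have h1 : (2:ℝ) < Real.exp 1 := by have := Real.exp_one_gt_d9; linarith
  have h2 : Real.exp (-1) < 1/2 := by
    rw [Real.exp_neg, inv_lt_comm₀ (by positivity) (by norm_num)]; linarith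
  have h3 := Real.exp_pos (-1)
  rw [lt_div_iff₀ (by positivity)]
  linarith

lemma norm_one_sub_ge {z w : ℂ} (hz : ‖z‖ < 1) (hw : ‖w‖ < 1) :
    1 - ‖z‖ ≤ ‖1 - (starRingEnd ℂ) w * z‖ := by
  have h := norm_sub_norm_le (1:ℂ) ((starRingEnd ℂ) w * z)
  rw [norm_one, norm_mul, RCLike.norm_conj] at h
  nlinarith [norm_nonneg z, norm_nonneg w]

lemma mem_Dball_of_close {z w : ℂ} (hz : ‖z‖ < 1) (hw : ‖w‖ < 1)
    (h : ‖z - w‖ ≤ (1 - ‖z‖) / 2) : w ∈ Dball z := by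
  refine ⟨hw, lt_of_le_of_lt ?_ half_lt_tanh_one⟩
  have h1 := norm_one_sub_ge hz hw
  rw [norm_div, div_le_iff₀ (by linarith)]
  linarith

/-- the comparison constant -/
noncomputable def KD : ℝ := 2 * Real.tanh 1 / (1 - Real.tanh 1)

lemma tanh_one_lt : Real.tanh 1 < 1 := Real.tanh_lt_one 1

lemma KD_pos : 0 < KD := by
  unfold KD
  have := half_lt_tanh_one
  have := tanh_one_lt
  apply div_pos <;> linarith

lemma Dball_dist_aux {d e : ℝ} (h : d ≤ Real.tanh 1 * (2 * e + d)) : d ≤ KD * e := by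
  unfold KD
  have := tanh_one_lt
  rw [div_mul_eq_mul_div, le_div_iff₀ (by linarith)]
  linarith

lemma Dball_lt {z w : ℂ} (hz : ‖z‖ < 1) (h : w ∈ Dball z) :
    ‖z - w‖ ≤ Real.tanh 1 * ‖1 - (starRingEnd ℂ) w * z‖ := by
  obtain ⟨hw, h⟩ := h
  have h1 := norm_one_sub_ge hz hw
  rw [norm_div, div_lt_iff₀ (by linarith)] at h
  exact h.le

lemma Dball_dist {z w : ℂ} (hz : ‖z‖ < 1) (h : w ∈ Dball z) :
    ‖z - w‖ ≤ KD * (1 - ‖z‖) := by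
  apply Dball_dist_aux
  refine (Dball_lt hz h).trans ?_
  have := half_lt_tanh_one
  gcongr
  have e : 1 - (starRingEnd ℂ) w * z = ((1 - ‖z‖^2 : ℝ) : ℂ) + (starRingEnd ℂ) (z - w) * z := by
    push_cast
    rw [← Complex.conj_mul' z, map_sub]; ring
  rw [e]
  refine (norm_add_le _ _).trans ?_
  rw [norm_mul, RCLike.norm_conj, Complex.norm_real, Real.norm_of_nonneg (by nlinarith [norm_nonneg z])]
  nlinarith [norm_nonneg z, norm_nonneg (z-w)]

lemma Dball_dist' {z w : ℂ} (hz : ‖z‖ < 1) (h : w ∈ Dball z) :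
    1 - ‖z‖ ≤ (1 + KD) * (1 - ‖w‖) := by
  have hw := h.1
  have key : ‖z - w‖ ≤ KD * (1 - ‖w‖) := by
    apply Dball_dist_aux
    refine (Dball_lt hz h).trans ?_
    have := half_lt_tanh_one
    gcongr
    have e : 1 - (starRingEnd ℂ) w * z = ((1 - ‖w‖^2 : ℝ) : ℂ) - (starRingEnd ℂ) w * (z - w) := by
      push_cast
      rw [← Complex.conj_mul' w]; ring
    rw [e]
    refine (norm_sub_le _ _).trans ?_
    rw [norm_mul, RCLike.norm_conj, Complex.norm_real, Real.norm_of_nonneg (by nlinarith [norm_nonneg w])]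
    nlinarith [norm_nonneg w, norm_nonneg (z-w)]
  have := norm_sub_norm_le w z
  rw [norm_sub_rev] at this
  linarith

lemma measurable_fEx (b β : ℝ) : Measurable (fEx b β) := by
  unfold fEx
  refine Measurable.ite (measurableSet_lt (by fun_prop) (by fun_prop)) (by fun_prop) ?_
  fun_prop

lemma measurableSet_Dball (z : ℂ) : MeasurableSet (Dball z) := by
  unfold Dball
  apply MeasurableSet.inter
  · exact measurableSet_lt (f := fun w : ℂ => ‖w‖) (g := fun _ => (1:ℝ)) (by fun_prop) (by fun_prop)
  · exact measurableSet_lt (f := fun w : ℂ => ‖(z - w) / (1 - (starRingEnd ℂ) w * z)‖)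
      (g := fun _ => Real.tanh 1)
      ((((measurable_const.sub measurable_id)).div (measurable_const.sub
        (Complex.continuous_conj.measurable.mul_const z))).norm) (by fun_prop)

lemma fEx_bound {b β : ℝ} (hbβ : β < b) {z w : ℂ} (hz : ‖z‖ < 1) (h : w ∈ Dball z) :
    |fEx b β w| ≤ 1 + 2 * (((1 - ‖z‖) / (1 + KD)) ^ (b - β))⁻¹ := by
  have hK := KD_pos
  have h1 : (1 - ‖z‖) / (1 + KD) ≤ 1 - ‖w‖ := by
    rw [div_le_iff₀ (by linarith), mul_comm]; exact Dball_dist' hz h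
  have h0 : 0 < (1 - ‖z‖) / (1 + KD) := div_pos (by linarith) (by linarith)
  have hp : 0 < (((1 - ‖z‖) / (1 + KD)) ^ (b - β)) := Real.rpow_pos_of_pos h0 _
  unfold fEx
  split_ifs with hh
  · rw [abs_one]; have := inv_pos.2 hp; linarith
  · push Not at hh
    rw [abs_mul]
    have hle : (((1 - ‖z‖) / (1 + KD)) ^ (b - β)) ≤ (1 - ‖w‖) ^ (b - β) :=
      Real.rpow_le_rpow h0.le h1 (by linarith)
    have hp2 : 0 < (1 - ‖w‖) ^ (b - β) := hp.trans_le hle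
    have hs := Real.abs_sin_le_one (1 / (1 - ‖w‖) ^ b)
    have hA : |1 / (‖w‖ * (1 - ‖w‖) ^ (b - β))| ≤ 2 * (((1 - ‖z‖) / (1 + KD)) ^ (b - β))⁻¹ := by
      rw [abs_of_nonneg (by positivity), one_div, mul_inv]
      have : ‖w‖⁻¹ ≤ 2 := by
        rw [inv_le_comm₀ (by linarith) (by norm_num)]; linarith
      gcongr
    calc _ ≤ 2 * (((1 - ‖z‖) / (1 + KD)) ^ (b - β))⁻¹ * 1 := by gcongr
      _ ≤ _ := by linarith

lemma volume_Dball_le {z : ℂ} (hz : ‖z‖ < 1) :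
    (volume (Dball z)) ≤ ENNReal.ofReal (Real.pi * (KD * (1 - ‖z‖))^2) := by
  have hs : Dball z ⊆ Metric.closedBall z (KD * (1 - ‖z‖)) := by
    intro w hw
    rw [Metric.mem_closedBall, dist_comm, dist_eq_norm]; exact Dball_dist hz hw
  refine (measure_mono hs).trans ?_
  rw [Complex.volume_closedBall, mul_comm, ENNReal.ofReal_mul Real.pi_pos.le, ENNReal.ofReal_pow (mul_nonneg KD_pos.le (by linarith))]
  apply le_of_eq
  congr 1
  rw [ENNReal.ofReal, Real.toNNReal_of_nonneg Real.pi_pos.le]; rfl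

lemma volume_Dball_pos {z : ℂ} (hz : ‖z‖ < 1) : 0 < volume (Dball z) := by
  have hs : Metric.ball z ((1 - ‖z‖)/2) ⊆ Dball z := by
    intro w hw
    rw [Metric.mem_ball, dist_comm, dist_eq_norm] at hw
    refine mem_Dball_of_close hz ?_ hw.le
    have := norm_sub_norm_le w z
    rw [norm_sub_rev] at this
    linarith
  exact (Metric.measure_ball_pos volume z (by linarith)).trans_le (measure_mono hs)

lemma integrableOn_fEx {b β : ℝ} (hbβ : β < b) {z : ℂ} (hz : ‖z‖ < 1) (c : ℝ) :
    IntegrableOn (fun w => |fEx b β w - c|) (Dball z) := by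
  have hfin : volume (Dball z) < ⊤ := (volume_Dball_le hz).trans_lt ENNReal.ofReal_lt_top
  refine IntegrableOn.of_bound hfin
    (((measurable_fEx b β).sub_const c).abs.aestronglyMeasurable)
    (1 + 2 * (((1 - ‖z‖) / (1 + KD)) ^ (b - β))⁻¹ + |c|) ?_
  rw [ae_restrict_iff' (measurableSet_Dball z)]
  refine Filter.Eventually.of_forall fun w hw => ?_
  rw [Real.norm_eq_abs, abs_abs]
  refine (abs_sub _ _).trans ?_
  linarith [fEx_bound hbβ hz hw]
lemma oneD_deriv {b ρ : ℝ} (hρ : ρ < 1) :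
    HasDerivAt (fun x : ℝ => (1 - x) ^ (-b)) (b * (1 - ρ) ^ (-b - 1)) ρ := by
  have h := ((hasDerivAt_id ρ).const_sub 1).rpow_const (p := -b) (Or.inl (by simp; linarith))
  exact h.congr_deriv (by simp)

lemma oneD_bound {b : ℝ} (hb : 0 < b) {r r' : ℝ} (hr : r ≤ r') (hr' : r' < 1) {σ : ℝ}
    (hσ : |σ| = 1) :
    (((1 - r') ^ (-b) - (1 - r) ^ (-b)) / 2 - 3) / 2 ≤
      ∫ x in r..r', max (σ * Real.sin ((1 - x) ^ (-b))) 0 * (b * (1 - x) ^ (-b - 1)) := by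
  have hcont : ∀ p : ℝ, ContinuousOn (fun x : ℝ => (1 - x) ^ p) (uIcc r r') := by
    intro p x hx
    rw [uIcc_of_le hr] at hx
    exact ((continuousAt_const.sub continuousAt_id).rpow_const
      (Or.inl (by simp; linarith [hx.2]))).continuousWithinAt
  have hc1 := hcont (-b)
  have hc2 := hcont (-b - 1)
  let G : ℝ → ℝ := fun u => (u / 2 - Real.sin (2 * u) / 4 - σ * Real.cos u) / 2
  have hG : ∀ u, HasDerivAt G ((σ * Real.sin u + Real.sin u ^ 2) / 2) u := by
    intro u
    have h1 : HasDerivAt (fun u : ℝ => Real.sin (2 * u)) (Real.cos (2 * u) * (2 * 1)) u :=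
      ((hasDerivAt_id u).const_mul 2).sin
    have := ((((hasDerivAt_id u).div_const 2).sub (h1.div_const 4)).sub
      ((Real.hasDerivAt_cos u).const_mul σ)).div_const 2
    refine this.congr_deriv ?_
    rw [Real.cos_two_mul, Real.cos_sq']; ring
  have hFTC : ∫ x in r..r', (σ * Real.sin ((1 - x) ^ (-b)) + Real.sin ((1 - x) ^ (-b)) ^ 2) / 2 *
      (b * (1 - x) ^ (-b - 1)) = G ((1 - r') ^ (-b)) - G ((1 - r) ^ (-b)) := by
    apply intervalIntegral.integral_eq_sub_of_hasDerivAt (f := fun x => G ((1 - x) ^ (-b)))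
    · intro x hx
      rw [uIcc_of_le hr] at hx
      exact (hG _).comp x (oneD_deriv (by linarith [hx.2]))
    · apply ContinuousOn.intervalIntegrable
      fun_prop
  have hmono : ∫ x in r..r', (σ * Real.sin ((1 - x) ^ (-b)) + Real.sin ((1 - x) ^ (-b)) ^ 2) / 2 *
      (b * (1 - x) ^ (-b - 1)) ≤
      ∫ x in r..r', max (σ * Real.sin ((1 - x) ^ (-b))) 0 * (b * (1 - x) ^ (-b - 1)) := by
    apply intervalIntegral.integral_mono_on hr
    · apply ContinuousOn.intervalIntegrable
      fun_prop
    · apply ContinuousOn.intervalIntegrable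
      fun_prop
    · intro x hx
      have : 0 < 1 - x := by linarith [hx.2]
      gcongr
      set s := Real.sin ((1 - x) ^ (-b))
      have hs : |s| ≤ 1 := Real.abs_sin_le_one _
      have h2 : s ^ 2 ≤ |σ * s| := by
        rw [abs_mul, hσ, one_mul, ← sq_abs]; nlinarith [abs_nonneg s]
      rcases le_total 0 (σ * s) with h | h
      · rw [max_eq_left h]; rw [abs_of_nonneg h] at h2; linarith
      · rw [max_eq_right h]; rw [abs_of_nonpos h] at h2; linarith
  refine le_trans ?_ (hFTC.symm.le.trans hmono)
  have b1 := fun u : ℝ => abs_le.1 (Real.abs_sin_le_one (2 * u))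
  have b2 : ∀ u : ℝ, |σ * Real.cos u| ≤ 1 := fun u => by
    rw [abs_mul, hσ, one_mul]; exact Real.abs_cos_le_one u
  have b2' := fun u : ℝ => abs_le.1 (b2 u)
  simp only [G]
  have e1 := b1 ((1 - r') ^ (-b))
  have e2 := b1 ((1 - r) ^ (-b))
  have e3 := b2' ((1 - r') ^ (-b))
  have e4 := b2' ((1 - r) ^ (-b))
  linarith [e1.1, e1.2, e2.1, e2.2, e3.1, e3.2, e4.1, e4.2]

lemma exists_sign (c : ℝ) : ∃ σ : ℝ, |σ| = 1 ∧ σ * c ≤ 0 := by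
  rcases le_total c 0 with h | h
  · exact ⟨1, by simp, by simpa⟩
  · exact ⟨-1, by simp, by simpa⟩

/-- the radial lower bound function -/
noncomputable def mfun (b σ x : ℝ) : ℝ :=
  max (σ * Real.sin ((1 - x) ^ (-b))) 0 * (b * (1 - x) ^ (-b - 1))

lemma pointwise {b β : ℝ} (hβ : 0 < β) (hbβ : β < b) {r : ℝ} (hr : 1/2 ≤ r) (hr1 : r < 1)
    {σ c : ℝ} (hσ : |σ| = 1) (hc : σ * c ≤ 0) {w : ℂ} (h1 : r ≤ ‖w‖)
    (h2 : ‖w‖ ≤ 1 - 3/4 * (1 - r)) :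
    (1 - r) ^ (β - b) / (b * (3/4 * (1 - r)) ^ (-b - 1)) * mfun b σ ‖w‖ ≤ |fEx b β w - c| := by
  have hb : 0 < b := hβ.trans hbβ
  have ht : 0 < 1 - r := by linarith
  have hw : 0 < 1 - ‖w‖ := by linarith
  have hw0 : 0 < ‖w‖ := by linarith
  set L := b * (3/4 * (1 - r)) ^ (-b - 1) with hL
  have hLpos : 0 < L := by positivity
  have hLle : b * (1 - ‖w‖) ^ (-b - 1) ≤ L := by
    rw [hL]
    gcongr ?_ * ?_
    exact Real.rpow_le_rpow_of_nonpos (by linarith) (by linarith) (by linarith)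
  unfold mfun fEx
  rw [if_neg (by linarith), one_div ((1 - ‖w‖) ^ b), ← Real.rpow_neg hw.le]
  set s := Real.sin ((1 - ‖w‖) ^ (-b))
  set A := 1 / (‖w‖ * (1 - ‖w‖) ^ (b - β)) with hA
  have hAge : (1 - r) ^ (β - b) ≤ A := by
    have e1 : (1 - ‖w‖) ^ (b - β) ≤ (1 - r) ^ (b - β) :=
      Real.rpow_le_rpow hw.le (by linarith) (by linarith)
    have e2 : 0 < (1 - ‖w‖) ^ (b - β) := by positivity
    have e3 : 0 < (1 - r) ^ (b - β) := by positivity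
    have : β - b = -(b - β) := by ring
    rw [this, Real.rpow_neg ht.le, hA, ← one_div]
    apply one_div_le_one_div_of_le (by positivity)
    nlinarith
  have ha : 0 < (1 - r) ^ (β - b) := by positivity
  calc (1 - r) ^ (β - b) / L * (max (σ * s) 0 * (b * (1 - ‖w‖) ^ (-b - 1)))
      ≤ (1 - r) ^ (β - b) / L * (max (σ * s) 0 * L) := by gcongr
    _ = (1 - r) ^ (β - b) * max (σ * s) 0 := by field_simp
    _ ≤ A * max (σ * s) 0 := by gcongr
    _ ≤ |A * s - c| := by
      rcases le_total 0 (σ * s) with h | h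
      · rw [max_eq_left h]
        calc A * (σ * s) ≤ σ * (A * s - c) := by linarith
          _ ≤ |σ * (A * s - c)| := le_abs_self _
          _ = _ := by rw [abs_mul, hσ, one_mul]
      · rw [max_eq_right h, mul_zero]; exact abs_nonneg _

lemma polar_close {z : ℂ} {ρ φ : ℝ} (hz : ‖z‖ < 1) :
    ‖z - (ρ : ℂ) * Complex.exp (Complex.I * φ)‖ ≤ |‖z‖ - ρ| + |z.arg - φ| := by
  have e : z - (ρ : ℂ) * Complex.exp (Complex.I * φ) =
      ((‖z‖ - ρ : ℝ) : ℂ) * Complex.exp (Complex.I * φ) +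
      (‖z‖ : ℂ) * Complex.exp (Complex.I * φ) * (Complex.exp (Complex.I * ((z.arg - φ : ℝ) : ℂ)) - 1) := by
    have : Complex.exp (Complex.I * φ) * Complex.exp (Complex.I * ((z.arg - φ : ℝ) : ℂ)) =
        Complex.exp (z.arg * Complex.I) := by
      rw [← Complex.exp_add]; congr 1; push_cast; ring
    have h2 := Complex.norm_mul_exp_arg_mul_I z
    rw [mul_sub, mul_assoc (‖z‖ : ℂ), this, h2]
    push_cast; ring
  have hu : ‖Complex.exp (Complex.I * φ)‖ = 1 := by
    rw [mul_comm]; exact Complex.norm_exp_ofReal_mul_I φ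
  rw [e]
  refine (norm_add_le _ _).trans ?_
  rw [norm_mul, norm_mul, norm_mul, hu, Complex.norm_real, Complex.norm_real, mul_one, mul_one,
    Real.norm_eq_abs, norm_norm]
  have h3 := Real.norm_exp_I_mul_ofReal_sub_one_le (x := z.arg - φ)
  rw [Real.norm_eq_abs] at h3
  have := norm_nonneg z
  nlinarith [norm_nonneg (Complex.exp (Complex.I * ((z.arg - φ : ℝ) : ℂ)) - 1)]

lemma exists_interval {z : ℂ} {t : ℝ} (ht1 : t ≤ 1) : ∃ l : ℝ,
    ∀ φ ∈ Ioo l (l + t / 4), φ ∈ Ioo (-Real.pi) Real.pi ∧ |z.arg - φ| ≤ t / 4 := by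
  have h1 := Complex.neg_pi_lt_arg z
  have h2 := Complex.arg_le_pi z
  have h3 := Real.pi_gt_three
  rcases le_total z.arg 0 with h | h
  · refine ⟨z.arg, fun φ hφ => ⟨⟨by linarith [hφ.1], by linarith [hφ.2]⟩, ?_⟩⟩
    rw [abs_le]; constructor <;> linarith [hφ.1, hφ.2]
  · refine ⟨z.arg - t / 4, fun φ hφ => ⟨⟨by linarith [hφ.1], by linarith [hφ.2]⟩, ?_⟩⟩
    rw [abs_le]; constructor <;> linarith [hφ.1, hφ.2]
lemma int_lower {b β : ℝ} (hβ : 0 < β) (hbβ : β < b) {z : ℂ} (hz2 : 1/2 ≤ ‖z‖) (hz : ‖z‖ < 1)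
    {σ c : ℝ} (hσ : |σ| = 1) (hc : σ * c ≤ 0) :
    (1/2 * ((1 - ‖z‖) ^ (β - b) / (b * (3/4 * (1 - ‖z‖)) ^ (-b - 1)))) *
      (∫ x in ‖z‖..(1 - 3/4 * (1 - ‖z‖)), mfun b σ x) * ((1 - ‖z‖) / 4) ≤
      ∫ w in Dball z, |fEx b β w - c| := by
  have hb : 0 < b := hβ.trans hbβ
  set r := ‖z‖ with hr
  set r' := 1 - 3/4 * (1 - r) with hr'
  have ht : 0 < 1 - r := by linarith
  have hrr' : r ≤ r' := by linarith
  have hr'1 : r' < 1 := by linarith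
  set g := (1 - r) ^ (β - b) / (b * (3/4 * (1 - r)) ^ (-b - 1)) with hg
  have hg0 : 0 < g := by positivity
  obtain ⟨l, hl⟩ := exists_interval (z := z) (t := 1 - r) (by linarith)
  have hmn : ∀ x ∈ Ioc r r', 0 ≤ mfun b σ x := by
    intro x hx
    have : 0 < 1 - x := by linarith [hx.2]
    unfold mfun; positivity
  have hmm : Measurable (mfun b σ) := by unfold mfun; fun_prop
  have hmint : IntegrableOn (fun x => 1/2 * g * mfun b σ x) (Ioc r r') := by
    have hcont : ∀ p : ℝ, ContinuousOn (fun x : ℝ => (1 - x) ^ p) (Icc r r') := by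
      intro p x hx
      exact ((continuousAt_const.sub continuousAt_id).rpow_const
        (Or.inl (by simp; linarith [hx.2]))).continuousWithinAt
    have hc1 := hcont (-b)
    have hc2 := hcont (-b - 1)
    refine IntegrableOn.mono_set (ContinuousOn.integrableOn_Icc ?_) Ioc_subset_Icc_self
    unfold mfun
    fun_prop
  have hint := integrableOn_fEx hbβ hz c
  have hnn : 0 ≤ ∫ w in Dball z, |fEx b β w - c| := integral_nonneg fun _ => abs_nonneg _
  rw [← ENNReal.ofReal_le_ofReal_iff hnn,
    ofReal_integral_eq_lintegral_ofReal hint (Filter.Eventually.of_forall fun _ => abs_nonneg _),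
    ← lintegral_indicator (measurableSet_Dball z), ← Complex.lintegral_comp_polarCoord_symm]
  have hQ : Ioc r r' ×ˢ Ioo l (l + (1 - r) / 4) ⊆ polarCoord.target := by
    rintro ⟨x, y⟩ ⟨hx, hy⟩
    exact ⟨by simp only [mem_Ioi]; linarith [hx.1], (hl y hy).1⟩
  calc ENNReal.ofReal (1/2 * g * (∫ x in r..r', mfun b σ x) * ((1 - r) / 4))
      = ∫⁻ p in Ioc r r' ×ˢ Ioo l (l + (1 - r) / 4), ENNReal.ofReal (1/2 * g * mfun b σ p.1) := by
        rw [Measure.volume_eq_prod, setLIntegral_prod _ (by fun_prop)]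
        simp only [setLIntegral_const, Real.volume_Ioo]
        rw [lintegral_mul_const _ (by fun_prop), ← ofReal_integral_eq_lintegral_ofReal hmint,
          integral_const_mul, ← ENNReal.ofReal_mul, intervalIntegral.integral_of_le hrr']
        · congr 2; ring
        · exact mul_nonneg (by positivity) (setIntegral_nonneg measurableSet_Ioc hmn)
        · rw [Filter.EventuallyLE, ae_restrict_iff' measurableSet_Ioc]
          exact Filter.Eventually.of_forall fun x hx => mul_nonneg (by positivity) (hmn x hx)
    _ ≤ ∫⁻ p in Ioc r r' ×ˢ Ioo l (l + (1 - r) / 4), ENNReal.ofReal p.1 •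
          (Dball z).indicator (fun w => ENNReal.ofReal |fEx b β w - c|)
            (Complex.polarCoord.symm p) := by
        apply setLIntegral_mono' (measurableSet_Ioc.prod measurableSet_Ioo)
        rintro ⟨x, y⟩ ⟨hx, hy⟩
        simp only at hx hy
        have hx0 : 0 < x := by linarith [hx.1]
        have hw : ‖Complex.polarCoord.symm (x, y)‖ = x := by
          rw [Complex.norm_polarCoord_symm]; exact abs_of_pos hx0
        have hwe : Complex.polarCoord.symm (x, y) = (x : ℂ) * Complex.exp (Complex.I * y) := by
          rw [Complex.polarCoord_symm_apply, mul_comm Complex.I, Complex.exp_mul_I]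
          push_cast; rfl
        have hmem : Complex.polarCoord.symm (x, y) ∈ Dball z := by
          apply mem_Dball_of_close hz
          · rw [hw]; linarith [hx.2]
          · rw [hwe]
            refine (polar_close hz).trans ?_
            have h1 := (hl y hy).2
            have h2 : |‖z‖ - x| ≤ (1 - r) / 4 := by
              rw [abs_le]; constructor <;> linarith [hx.1, hx.2]
            linarith
        rw [indicator_of_mem hmem, smul_eq_mul, ← ENNReal.ofReal_mul hx0.le]
        apply ENNReal.ofReal_le_ofReal
        have hp := pointwise hβ hbβ hz2 hz hσ hc (w := Complex.polarCoord.symm (x, y))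
          (by rw [hw]; exact hx.1.le) (by rw [hw]; exact hx.2)
        rw [hw] at hp
        rw [mul_assoc]
        exact mul_le_mul (by linarith [hx.1]) hp (mul_nonneg hg0.le (hmn x hx)) hx0.le
    _ ≤ _ := lintegral_mono_set hQ

lemma meanOsc1_eq (f : ℂ → ℝ) (z : ℂ) : meanOsc1 f z =
    ((volume (Dball z)).toReal)⁻¹ * ∫ ξ in Dball z, |f ξ - avg1 f z| := by
  unfold meanOsc1
  have h : dA = (ENNReal.ofReal Real.pi)⁻¹ • volume := rfl
  have hpi : 0 < (ENNReal.ofReal Real.pi)⁻¹.toReal := by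
    rw [ENNReal.toReal_inv, ENNReal.toReal_ofReal Real.pi_pos.le]; exact inv_pos.2 Real.pi_pos
  rw [h, Measure.restrict_smul, integral_smul_measure, Measure.smul_apply, smul_eq_mul,
    smul_eq_mul, ENNReal.toReal_mul]
  rw [mul_inv]
  field_simp

lemma main_lower {b β : ℝ} (hβ : 0 < β) (hbβ : β < b) :
    ∃ C > (0:ℝ), ∀ z : ℂ, 1/2 ≤ ‖z‖ → ‖z‖ < 1 → (1 - ‖z‖) ^ b ≤ ((4/3 : ℝ) ^ b - 1) / 12 →
      C * (1 - ‖z‖) ^ (β - b) ≤ meanOsc1 (fEx b β) z := by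
  have hb : 0 < b := hβ.trans hbβ
  have hκ : 0 < (4/3 : ℝ) ^ b - 1 := sub_pos.2 (Real.one_lt_rpow (by norm_num) hb)
  set κ := (4/3 : ℝ) ^ b - 1 with hκd
  have hK := KD_pos
  have hpi := Real.pi_pos
  refine ⟨κ / (64 * b * (4/3 : ℝ) ^ (b + 1) * (Real.pi * KD ^ 2)), by positivity, ?_⟩
  intro z hz2 hz hsmall
  obtain ⟨σ, hσ, hc⟩ := exists_sign (avg1 (fEx b β) z)
  have hI := int_lower hβ hbβ hz2 hz hσ hc
  have h1 := oneD_bound hb (r := ‖z‖) (r' := 1 - 3/4 * (1 - ‖z‖)) (by linarith) (by linarith) hσ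
  have hIeq : (∫ x in ‖z‖..(1 - 3/4 * (1 - ‖z‖)), mfun b σ x) =
    ∫ x in ‖z‖..(1 - 3/4 * (1 - ‖z‖)), max (σ * Real.sin ((1 - x) ^ (-b))) 0 *
      (b * (1 - x) ^ (-b - 1)) := rfl
  rw [← hIeq] at h1
  have hv := volume_Dball_le hz
  have hvp := volume_Dball_pos hz
  rw [meanOsc1_eq]
  set J := ∫ x in ‖z‖..(1 - 3/4 * (1 - ‖z‖)), mfun b σ x
  have ht : 0 < 1 - ‖z‖ := by linarith
  set t := 1 - ‖z‖ with htd
  have hvr : (volume (Dball z)).toReal ≤ Real.pi * (KD * t) ^ 2 :=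
    ENNReal.toReal_le_of_le_ofReal (by positivity) hv
  have hvr0 : 0 < (volume (Dball z)).toReal :=
    ENNReal.toReal_pos hvp.ne' (ne_top_of_le_ne_top ENNReal.ofReal_ne_top hv)
  have hP : 0 < t ^ b := by positivity
  have e1 : t ^ (-b) = (t ^ b)⁻¹ := Real.rpow_neg ht.le b
  have e34 : (3/4 : ℝ) = (4/3)⁻¹ := by norm_num
  have e2 : (1 - (1 - 3/4 * t)) ^ (-b) = (4/3 : ℝ) ^ b * (t ^ b)⁻¹ := by
    rw [sub_sub_cancel, Real.mul_rpow (by norm_num) ht.le, e1, e34,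
      Real.inv_rpow (by norm_num), Real.rpow_neg (by norm_num), inv_inv]
  have e3 : (3/4 * t) ^ (-b - 1) = (4/3 : ℝ) ^ (b + 1) * (t ^ b * t)⁻¹ := by
    have : -b - 1 = -(b + 1) := by ring
    rw [this, Real.mul_rpow (by norm_num) ht.le, e34,
      Real.inv_rpow (by norm_num), Real.rpow_neg (by norm_num), inv_inv, Real.rpow_neg ht.le,
      Real.rpow_add_one ht.ne']
  have hJ : κ / (8 * t ^ b) ≤ J := by
    refine le_trans ?_ h1
    rw [e2, e1]
    have : 12 ≤ κ * (t ^ b)⁻¹ := by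
      rw [← div_eq_mul_inv, le_div_iff₀ hP]; linarith
    have e : κ / (8 * t ^ b) = κ * (t ^ b)⁻¹ / 8 := by field_simp
    have e' : (4/3 : ℝ) ^ b * (t ^ b)⁻¹ - (t ^ b)⁻¹ = κ * (t ^ b)⁻¹ := by rw [hκd]; ring
    rw [e, e']
    linarith
  have ha : 0 < t ^ (β - b) := by positivity
  rw [e3] at hI
  calc κ / (64 * b * (4/3 : ℝ) ^ (b + 1) * (Real.pi * KD ^ 2)) * t ^ (β - b)
      = (Real.pi * (KD * t) ^ 2)⁻¹ *
        (1/2 * (t ^ (β - b) / (b * ((4/3 : ℝ) ^ (b + 1) * (t ^ b * t)⁻¹))) * (κ / (8 * t ^ b)) *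
          (t / 4)) := by
        field_simp
        norm_num
    _ ≤ ((volume (Dball z)).toReal)⁻¹ *
        (1/2 * (t ^ (β - b) / (b * ((4/3 : ℝ) ^ (b + 1) * (t ^ b * t)⁻¹))) * J * (t / 4)) := by
        gcongr
    _ ≤ _ := by gcongr

theorem example_not_bmo (b β : ℝ) (hβ : 0 < β) (hbβ : β < b) :
    (∃ r₀ ∈ Set.Ioo (0:ℝ) 1, ∃ C > (0:ℝ), ∀ z : ℂ, r₀ ≤ ‖z‖ → ‖z‖ < 1 →
      C * (1 - ‖z‖) ^ (β - b) ≤ meanOsc1 (fEx b β) z) ∧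
    ¬ ∃ M : ℝ, ∀ z ∈ unitDisc, meanOsc1 (fEx b β) z ≤ M := by
  have hb : 0 < b := hβ.trans hbβ
  have h1 : ∃ r₀ ∈ Set.Ioo (0:ℝ) 1, ∃ C > (0:ℝ), ∀ z : ℂ, r₀ ≤ ‖z‖ → ‖z‖ < 1 →
      C * (1 - ‖z‖) ^ (β - b) ≤ meanOsc1 (fEx b β) z := by
    obtain ⟨C, hC, h⟩ := main_lower hβ hbβ
    have hκ : 0 < ((4/3 : ℝ) ^ b - 1) / 12 :=
      div_pos (sub_pos.2 (Real.one_lt_rpow (by norm_num) hb)) (by norm_num)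
    set κ := ((4/3 : ℝ) ^ b - 1) / 12
    have hd : 0 < min (1/2) (κ ^ b⁻¹) := lt_min (by norm_num) (by positivity)
    have hd1 : min (1/2) (κ ^ b⁻¹) ≤ 1/2 := min_le_left _ _
    refine ⟨1 - min (1/2) (κ ^ b⁻¹), ⟨by linarith, by linarith⟩, C, hC, fun z hz hz1 => ?_⟩
    refine h z (by linarith) hz1 ?_
    have h2 : 1 - ‖z‖ ≤ κ ^ b⁻¹ := by linarith [min_le_right (1/2) (κ ^ b⁻¹)]
    calc (1 - ‖z‖) ^ b ≤ (κ ^ b⁻¹) ^ b := Real.rpow_le_rpow (by linarith) h2 hb.le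
      _ = κ := Real.rpow_inv_rpow hκ.le hb.ne'
  refine ⟨h1, ?_⟩
  rintro ⟨M, hM⟩
  obtain ⟨r₀, hr₀, C, hC, h⟩ := h1
  have hT := (tendsto_rpow_neg_nhdsGT_zero (y := β - b) (by linarith)).eventually_gt_atTop (M / C)
  have hI : ∀ᶠ t in nhdsWithin (0:ℝ) (Ioi 0), t ∈ Ioo 0 (1 - r₀) :=
    Ioo_mem_nhdsGT (by linarith [hr₀.2])
  obtain ⟨t, ht1, ht2⟩ := (hT.and hI).exists
  have hn : ‖((1 - t : ℝ) : ℂ)‖ = 1 - t := by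
    rw [Complex.norm_real, Real.norm_of_nonneg (by linarith [ht2.2, hr₀.1])]
  have h3 := h ((1 - t : ℝ) : ℂ) (by rw [hn]; linarith [ht2.2]) (by rw [hn]; linarith [ht2.1])
  have h4 := hM ((1 - t : ℝ) : ℂ) (by rw [unitDisc, mem_setOf_eq, hn]; linarith [ht2.1])
  rw [hn, sub_sub_cancel] at h3
  rw [div_lt_iff₀ hC] at ht1
  linarith
end

section
/- Let b = β > 0 and let f : 𝔻 → ℝ be defined by f(r·e^{iθ}) = (1/r)·sin(1/(1−r)^b) for 1/2 ≤ r < 1 and f(r·e^{iθ}) = 1 for 0 ≤ r < 1/2. Then f is bounded on 𝔻 and satisfies the VWMO condition, but f does not belong to VMO¹: there is a constant C > 0 and r₀ ∈ (0,1) such that (1/|D(z,1)|)∫_{D(z,1)} |f(ξ) − f̂₁(z)| dA(ξ) ≥ C for all z ∈ 𝔻 with |z| ≥ r₀. -/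
open MeasureTheory Set

theorem polarRect_compact (r₁ r₂ φ₁ φ₂ : ℝ) : IsCompact (polarRect r₁ r₂ φ₁ φ₂) := by
  have h : polarRect r₁ r₂ φ₁ φ₂ =
      (fun p : ℝ × ℝ => (p.1 : ℂ) * Complex.exp ((p.2 : ℂ) * Complex.I)) ''
        (Icc r₁ r₂ ×ˢ Icc φ₁ φ₂) := by
    ext w
    constructor
    · rintro ⟨ρ, φ, h1, h2, h3, h4, rfl⟩
      exact ⟨(ρ, φ), ⟨⟨h1, h2⟩, ⟨h3, h4⟩⟩, rfl⟩
    · rintro ⟨⟨ρ, φ⟩, ⟨⟨h1, h2⟩, ⟨h3, h4⟩⟩, rfl⟩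
      exact ⟨ρ, φ, h1, h2, h3, h4, rfl⟩
  rw [h]
  exact (isCompact_Icc.prod isCompact_Icc).image (by fun_prop)

theorem polar_sym (g : ℝ → ℝ) {r₁ r₂ δ : ℝ} (h1 : 0 < r₁) (h2 : 0 ≤ δ) (h3 : δ < Real.pi) :
    ∫ w in polarRect r₁ r₂ (-δ) δ, g ‖w‖ = (2 * δ) * ∫ ρ in Icc r₁ r₂, ρ * g ρ := by
  rw [← integral_indicator (polarRect_compact _ _ _ _).measurableSet,
    ← Complex.integral_comp_polarCoord_symm]
  have hT : MeasurableSet polarCoord.target := polarCoord.open_target.measurableSet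
  have key : ∀ p ∈ polarCoord.target, p.1 • (polarRect r₁ r₂ (-δ) δ).indicator (fun w => g ‖w‖)
      (Complex.polarCoord.symm p) =
      (Icc r₁ r₂ ×ˢ Icc (-δ) δ).indicator (fun p : ℝ × ℝ => (p.1 * g p.1) * 1) p := by
    rintro ⟨ρ, φ⟩ ⟨hρ, hφ⟩
    simp only [mem_Ioi, mem_Ioo] at hρ hφ
    have hmem : Complex.polarCoord.symm (ρ, φ) ∈ polarRect r₁ r₂ (-δ) δ ↔
        (ρ, φ) ∈ Icc r₁ r₂ ×ˢ Icc (-δ) δ := by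
      have e : Complex.polarCoord.symm (ρ, φ) = (ρ : ℂ) * Complex.exp ((φ : ℂ) * Complex.I) := by
        rw [Complex.polarCoord_symm_apply, Complex.exp_mul_I]; simp
      constructor
      · rintro ⟨ρ', φ', a1, a2, a3, a4, a5⟩
        have hρ' : 0 < ρ' := by linarith
        rw [Complex.polarCoord_symm_apply, Complex.exp_mul_I] at a5
        have ha := congrArg Complex.arg a5
        have hn := congrArg norm a5
        rw [← Complex.exp_mul_I] at hn
        simp only [Complex.ofReal_cos, Complex.ofReal_sin] at ha hn
        rw [← Complex.exp_mul_I] at hn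
        rw [Complex.arg_mul_cos_add_sin_mul_I hρ ⟨hφ.1, hφ.2.le⟩,
          Complex.arg_mul_cos_add_sin_mul_I hρ' ⟨by linarith, by linarith⟩] at ha
        rw [norm_mul, norm_mul, Complex.norm_exp_ofReal_mul_I, Complex.norm_exp_ofReal_mul_I,
          Complex.norm_of_nonneg hρ.le, Complex.norm_of_nonneg hρ'.le] at hn
        simp only [mul_one] at hn
        subst ha; subst hn
        exact ⟨⟨a1, a2⟩, ⟨a3, a4⟩⟩
      · rintro ⟨⟨a1, a2⟩, ⟨a3, a4⟩⟩
        exact ⟨ρ, φ, a1, a2, a3, a4, e⟩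
    have hn : ‖Complex.polarCoord.symm (ρ, φ)‖ = ρ := by
      rw [Complex.norm_polarCoord_symm, abs_of_pos hρ]
    by_cases h : (ρ, φ) ∈ Icc r₁ r₂ ×ˢ Icc (-δ) δ
    · rw [indicator_of_mem h, indicator_of_mem (hmem.2 h), hn]; simp
    · rw [indicator_of_notMem h, indicator_of_notMem (fun h' => h (hmem.1 h'))]; simp
  rw [setIntegral_congr_fun hT key, setIntegral_indicator (measurableSet_Icc.prod measurableSet_Icc)]
  have hsub : polarCoord.target ∩ (Icc r₁ r₂ ×ˢ Icc (-δ) δ) = Icc r₁ r₂ ×ˢ Icc (-δ) δ := by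
    apply inter_eq_right.2
    rintro ⟨ρ, φ⟩ ⟨⟨a1, a2⟩, ⟨a3, a4⟩⟩
    simp only at a1 a2 a3 a4
    exact ⟨by simp only [mem_Ioi]; linarith, by constructor <;> simp only <;> linarith⟩
  rw [hsub, Measure.volume_eq_prod, setIntegral_prod_mul (fun ρ => ρ * g ρ) (fun _ => (1:ℝ))]
  simp only [integral_const, MeasurableSet.univ, measureReal_restrict_apply, univ_inter,
    smul_eq_mul, mul_one]
  rw [Real.volume_real_Icc_of_le (by linarith)]
  ring

theorem polar_vol (g : ℝ → ℝ) {r₁ r₂ φ₁ φ₂ : ℝ} (h1 : 0 < r₁) (h2 : φ₁ ≤ φ₂)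
    (h3 : φ₂ - φ₁ < 2 * Real.pi) :
    ∫ w in polarRect r₁ r₂ φ₁ φ₂, g ‖w‖ = (φ₂ - φ₁) * ∫ ρ in Icc r₁ r₂, ρ * g ρ := by
  set c := (φ₁ + φ₂) / 2 with hc
  set δ := (φ₂ - φ₁) / 2 with hδ
  have hrot := (rotation (Circle.exp c)).measurePreserving
  have := hrot.setIntegral_preimage_emb
    (rotation (Circle.exp c)).toHomeomorph.measurableEmbedding (fun w => g ‖w‖)
    (polarRect r₁ r₂ φ₁ φ₂)
  rw [← this]
  have hpre : (rotation (Circle.exp c)) ⁻¹' (polarRect r₁ r₂ φ₁ φ₂) = polarRect r₁ r₂ (-δ) δ := by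
    ext w
    simp only [mem_preimage, rotation_apply, Circle.coe_exp]
    constructor
    · rintro ⟨ρ, φ, a1, a2, a3, a4, a5⟩
      refine ⟨ρ, φ - c, a1, a2, by linarith, by linarith, ?_⟩
      have : w = Complex.exp (-(c * Complex.I)) * (Complex.exp (c * Complex.I) * w) := by
        rw [← mul_assoc, ← Complex.exp_add]; simp
      rw [this, a5]
      push_cast
      rw [show ((φ : ℂ) - c) * Complex.I = -(c * Complex.I) + φ * Complex.I by ring,
        Complex.exp_add]
      ring
    · rintro ⟨ρ, φ, a1, a2, a3, a4, rfl⟩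
      refine ⟨ρ, φ + c, a1, a2, by linarith, by linarith, ?_⟩
      push_cast
      rw [add_mul, Complex.exp_add]
      ring
  rw [hpre]
  simp only [LinearIsometryEquiv.norm_map]
  rw [polar_sym g h1 (by linarith) (by linarith)]
  rw [hδ]; ring

theorem polar_dA (g : ℝ → ℝ) {r₁ r₂ φ₁ φ₂ : ℝ} (h1 : 0 < r₁) (h2 : φ₁ ≤ φ₂)
    (h3 : φ₂ - φ₁ < 2 * Real.pi) :
    ∫ w in polarRect r₁ r₂ φ₁ φ₂, g ‖w‖ ∂dA
      = Real.pi⁻¹ * ((φ₂ - φ₁) * ∫ ρ in Icc r₁ r₂, ρ * g ρ) := by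
  rw [dA, Measure.restrict_smul, integral_smul_measure, polar_vol g h1 h2 h3]
  simp [ENNReal.toReal_inv, ENNReal.toReal_ofReal Real.pi_pos.le]

theorem dA_lt_top_of_isBounded {s : Set ℂ} (hs : Bornology.IsBounded s) : dA s < ⊤ := by
  rw [dA, Measure.smul_apply, smul_eq_mul]
  refine ENNReal.mul_lt_top ?_ hs.measure_lt_top
  simp [Real.pi_pos]

/-- the oscillatory integral bound -/
theorem osc (b k c : ℝ) (hb : 0 < b) (hk : 1 ≤ k) {r₁ r₂ : ℝ} (h0 : 0 < r₁) (h12 : r₁ ≤ r₂)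
    (h2 : r₂ < 1) :
    |∫ ρ in Icc r₁ r₂, Real.sin (k * (1 / (1 - ρ) ^ b) + c)| ≤
      ((b + 3) / b) * (1 - r₁) ^ b * (1 - r₁) := by
  rw [integral_Icc_eq_integral_Ioc, ← intervalIntegral.integral_of_le h12]
  set u : ℝ → ℝ := fun ρ => k * (1 / (1 - ρ) ^ b) + c with hu
  set G : ℝ → ℝ := fun ρ => Real.cos (u ρ) * (-((b+1) / (k * b)) * (1 - ρ) ^ b) with hG
  have hpos : ∀ x ∈ uIcc r₁ r₂, 0 < 1 - x := by
    intro x hx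
    rw [uIcc_of_le h12] at hx
    linarith [hx.2]
  have hcu : ContinuousOn u (uIcc r₁ r₂) := by
    intro x hx
    have h := hpos x hx
    apply ContinuousAt.continuousWithinAt
    have : ContinuousAt (fun ρ : ℝ => (1 - ρ) ^ b) x :=
      ContinuousAt.rpow_const (by fun_prop) (Or.inl h.ne')
    exact ((continuousAt_const.div this (Real.rpow_pos_of_pos h b).ne').const_mul k).add_const c
  have hcp : ContinuousOn (fun ρ : ℝ => (1 - ρ) ^ b) (uIcc r₁ r₂) :=
    (Continuous.continuousOn (by fun_prop)).rpow_const fun x hx => Or.inl (hpos x hx).ne'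
  have hd : ∀ x ∈ uIcc r₁ r₂, HasDerivAt
      (fun ρ => -Real.cos (u ρ) * ((1 - ρ) ^ (b+1) / (k * b)))
      (Real.sin (u x) - G x) x := by
    intro x hx
    have h := hpos x hx
    have hb0 := Real.rpow_pos_of_pos h b
    have d1 : HasDerivAt (fun ρ : ℝ => 1 - ρ) (-1) x := by
      simpa using (hasDerivAt_id x).const_sub 1
    have d2 := d1.rpow_const (p := b) (Or.inl h.ne')
    have d3 := d1.rpow_const (p := b + 1) (Or.inl h.ne')
    have d4 : HasDerivAt u _ x := (((hasDerivAt_const x (1:ℝ)).div d2 hb0.ne').const_mul k).add_const c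
    have d5 := (d4.cos.neg).mul (d3.div_const (k * b))
    refine d5.congr_deriv ?_
    simp only [hG, Pi.neg_apply]
    rw [Real.rpow_add_one h.ne', Real.rpow_sub_one h.ne', add_sub_cancel_right]
    field_simp
    ring
  have hiG : IntervalIntegrable G volume r₁ r₂ :=
    (ContinuousOn.mul (Real.continuous_cos.comp_continuousOn hcu) (continuousOn_const.mul hcp)).intervalIntegrable
  have his : IntervalIntegrable (fun ρ => Real.sin (u ρ)) volume r₁ r₂ :=
    (Real.continuous_sin.comp_continuousOn hcu).intervalIntegrable
  have hF := intervalIntegral.integral_eq_sub_of_hasDerivAt hd (his.sub hiG)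
  rw [intervalIntegral.integral_sub his hiG] at hF
  have hkb : b ≤ k * b := by nlinarith
  have hp1 : 0 < 1 - r₁ := by linarith
  have hX := Real.rpow_pos_of_pos hp1 b
  have hGb : ‖∫ ρ in r₁..r₂, G ρ‖ ≤ ((b+1)/b * (1 - r₁)^b) * |r₂ - r₁| := by
    apply intervalIntegral.norm_integral_le_of_norm_le_const
    intro x hx
    rw [uIoc_of_le h12] at hx
    have h : 0 < 1 - x := by linarith [hx.2]
    simp only [hG, Real.norm_eq_abs, abs_mul, abs_neg]
    rw [abs_of_pos (Real.rpow_pos_of_pos h b), abs_of_pos (a := (b+1)/(k*b)) (by positivity)]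
    have e1 := Real.abs_cos_le_one (u x)
    have e2 : (b+1)/(k*b) ≤ (b+1)/b := by gcongr
    have e3 : (1 - x)^b ≤ (1-r₁)^b := Real.rpow_le_rpow h.le (by linarith [hx.1]) hb.le
    have e4 := Real.rpow_pos_of_pos h b
    calc _ ≤ 1 * ((b+1)/b * (1-r₁)^b) := by gcongr
      _ = _ := one_mul _
  have hend : ∀ x, r₁ ≤ x → x < 1 → |-Real.cos (u x) * ((1 - x) ^ (b+1) / (k * b))| ≤
      1 / b * ((1-r₁)^b * (1 - r₁)) := by
    intro x hx1 hx2
    have h : 0 < 1 - x := by linarith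
    rw [abs_mul, abs_neg, abs_of_pos (a := (1 - x) ^ (b+1) / (k * b)) (by positivity)]
    rw [Real.rpow_add_one h.ne']
    have e1 := Real.abs_cos_le_one (u x)
    have e3 : (1 - x)^b ≤ (1-r₁)^b := Real.rpow_le_rpow h.le (by linarith) hb.le
    have e4 := Real.rpow_pos_of_pos h b
    calc _ ≤ 1 * (((1-r₁)^b * (1 - r₁)) / b) := by gcongr
      _ = _ := by ring
  have E1 := hend r₁ le_rfl (by linarith)
  have E2 := hend r₂ h12 h2
  rw [Real.norm_eq_abs, abs_of_nonneg (a := r₂ - r₁) (by linarith)] at hGb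
  have hGb' : ((b+1)/b * (1 - r₁)^b) * (r₂ - r₁) ≤ ((b+1)/b * (1 - r₁)^b) * (1 - r₁) := by
    gcongr
  have hfin : ((b + 3) / b) * (1 - r₁) ^ b * (1 - r₁) = ((b+1)/b * (1 - r₁)^b) * (1 - r₁) +
     2 * (1 / b * ((1-r₁)^b * (1 - r₁))) := by field_simp; ring
  rw [hfin]
  rw [abs_le] at *
  constructor <;> linarith [hGb.1, hGb.2, E1.1, E1.2, E2.1, E2.2]

/-- the radial profile of the example -/
noncomputable def gEx (b ρ : ℝ) : ℝ :=
  if ρ < 1 / 2 then 1 else (1 / ρ) * Real.sin (1 / (1 - ρ) ^ b)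

theorem fEx_eq (b : ℝ) (z : ℂ) : fEx b b z = gEx b ‖z‖ := by
  simp [fEx, gEx]

theorem gEx_bound (b ρ : ℝ) : |gEx b ρ| ≤ 2 := by
  unfold gEx
  split_ifs with h
  · norm_num
  · push Not at h
    rw [abs_mul, abs_of_pos (a := 1 / ρ) (by positivity)]
    have h1 : 1 / ρ ≤ 2 := by rw [div_le_iff₀ (by linarith)]; linarith
    have h2 := Real.abs_sin_le_one (1 / (1 - ρ) ^ b)
    calc 1 / ρ * |Real.sin (1 / (1 - ρ) ^ b)| ≤ 2 * 1 := by gcongr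
      _ = 2 := by norm_num

theorem gEx_meas (b : ℝ) : Measurable (gEx b) := by
  unfold gEx
  refine Measurable.ite (measurableSet_lt measurable_id measurable_const) measurable_const ?_
  fun_prop

theorem fEx_meas (b : ℝ) : Measurable (fEx b b) := by
  have : fEx b b = fun z => gEx b ‖z‖ := funext (fEx_eq b)
  rw [this]
  exact (gEx_meas b).comp measurable_norm

theorem fEx_bound_s17 (b : ℝ) (z : ℂ) : |fEx b b z| ≤ 2 := by
  rw [fEx_eq]; exact gEx_bound _ _

theorem integrableOn_of_bdd {E : Type*} [NormedAddCommGroup E] {s : Set ℂ}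
    (hs : Bornology.IsBounded s) (hm : MeasurableSet s) {f : ℂ → E}
    (hf : AEStronglyMeasurable f dA) (M : ℝ) (hM : ∀ x ∈ s, ‖f x‖ ≤ M) : IntegrableOn f s dA := by
  apply Measure.integrableOn_of_bounded (M := M) (dA_lt_top_of_isBounded hs).ne hf
  exact (ae_restrict_iff' hm).2 (Filter.Eventually.of_forall hM)

theorem fEx_int (b : ℝ) (hb : 0 < b) {r₁ r₂ φ₁ φ₂ : ℝ} (h0 : 1 / 2 ≤ r₁) (h12 : r₁ ≤ r₂)
    (h2 : r₂ < 1) (hφ : φ₁ ≤ φ₂) (h3 : φ₂ - φ₁ < 2 * Real.pi) :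
    |∫ w in polarRect r₁ r₂ φ₁ φ₂, fEx b b w ∂dA| ≤
      Real.pi⁻¹ * ((φ₂ - φ₁) * (((b + 3) / b) * (1 - r₁) ^ b * (1 - r₁))) := by
  simp only [fEx_eq]
  rw [polar_dA (gEx b) (by linarith) hφ h3]
  have e : ∫ ρ in Icc r₁ r₂, ρ * gEx b ρ =
      ∫ ρ in Icc r₁ r₂, Real.sin (1 * (1 / (1 - ρ) ^ b) + 0) := by
    apply setIntegral_congr_fun measurableSet_Icc
    intro ρ hρ
    have h : ¬ ρ < 1 / 2 := by push Not; linarith [hρ.1]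
    have h' : ρ ≠ 0 := by intro h''; linarith [hρ.1]
    simp only [gEx, if_neg h, one_mul, add_zero]
    field_simp
  rw [e, abs_mul, abs_mul, abs_of_pos (inv_pos.2 Real.pi_pos), abs_of_nonneg (sub_nonneg.2 hφ)]
  have := osc b 1 0 hb le_rfl (by linarith) h12 h2
  have hp := Real.pi_pos
  have := sub_nonneg.2 hφ
  gcongr

theorem dA_polar {r₁ r₂ φ₁ φ₂ : ℝ} (h0 : 0 < r₁) (h12 : r₁ ≤ r₂)
    (hφ : φ₁ ≤ φ₂) (h3 : φ₂ - φ₁ < 2 * Real.pi) :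
    (dA (polarRect r₁ r₂ φ₁ φ₂)).toReal =
      Real.pi⁻¹ * ((φ₂ - φ₁) * ((r₂ ^ 2 - r₁ ^ 2) / 2)) := by
  have h := polar_dA (fun _ => 1) (r₂ := r₂) h0 hφ h3
  simp only [mul_one, integral_const, MeasurableSet.univ, measureReal_restrict_apply, univ_inter,
    smul_eq_mul] at h
  rw [integral_Icc_eq_integral_Ioc, ← intervalIntegral.integral_of_le h12, integral_id] at h
  exact h

theorem angFrom_eq (z : ℂ) {ρ φ : ℝ} (hρ : 0 < ρ) (h1 : theta z ≤ φ)
    (h2 : φ < theta z + 2 * Real.pi) :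
    angFrom z ((ρ : ℂ) * Complex.exp ((φ : ℂ) * Complex.I)) = φ := by
  unfold angFrom
  rw [toIcoMod_eq_iff]
  refine ⟨⟨h1, h2⟩, ⌊(Real.pi - φ) / (2 * Real.pi)⌋, ?_⟩
  have := Complex.arg_mul_cos_add_sin_mul_I_sub hρ φ
  rw [Complex.exp_mul_I, zsmul_eq_mul]
  linarith

theorem small_rpow (b : ℝ) (hb : 0 < b) (η : ℝ) (hη : 0 < η) :
    ∃ r₀ ∈ Ico (1/2 : ℝ) 1, ∀ r, r₀ ≤ r → r < 1 → (1 - r) ^ b ≤ η := by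
  have hp := Real.rpow_pos_of_pos hη (1 / b)
  refine ⟨max (1/2) (1 - η ^ (1 / b)), ⟨le_max_left _ _, max_lt (by norm_num) (by linarith)⟩, ?_⟩
  intro r h1 h2
  have h3 := (le_max_right _ _).trans h1
  calc (1 - r) ^ b ≤ (η ^ (1 / b)) ^ b := Real.rpow_le_rpow (by linarith) (by linarith) hb.le
    _ = η := by rw [← Real.rpow_mul hη.le, one_div_mul_cancel hb.ne', Real.rpow_one]

theorem wQuot_bound (b : ℝ) (hb : 0 < b) (z : ℂ) (hz : ‖z‖ < 1) (hz2 : 1 / 2 ≤ ‖z‖)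
    (ζ : ℂ) (hζ : ζ ∈ Bz z) :
    wQuot (fun z => (fEx b b z : ℂ)) z ζ ≤ 8 * ((b + 3) / b) * (1 - ‖z‖) ^ b := by
  set r := ‖z‖ with hr
  set X := (1 - r) ^ b with hX
  set K := (b + 3) / b with hK
  have hKpos : 0 < K := by positivity
  have hXpos : 0 < X := Real.rpow_pos_of_pos (by linarith) b
  have hpi := Real.pi_pos
  obtain ⟨ρ, φ, h1, h2, h3, h4, hζe⟩ := hζ
  rw [← hr] at h1 h2 h4
  have hπr : Real.pi * (1 - r) < 2 * Real.pi := by nlinarith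
  have hang : angFrom z ζ = φ := by
    rw [hζe]; exact angFrom_eq z (by linarith) h3 (by linarith)
  have hnorm : ‖ζ‖ = ρ := by
    rw [hζe, norm_mul, Complex.norm_exp_ofReal_mul_I, Complex.norm_of_nonneg (by linarith), mul_one]
  have hBzz : Bzz z ζ = polarRect r ρ (theta z) φ := by rw [Bzz, hang, hnorm]
  have hBz : Bz z = polarRect r (1 - (1 - r) / 2) (theta z) (theta z + Real.pi * (1 - r)) := rfl
  have hsub : Bzz z ζ ⊆ Bz z := by
    rw [hBzz, hBz]
    rintro w ⟨ρ', φ', a1, a2, a3, a4, a5⟩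
    exact ⟨ρ', φ', a1, by linarith, a3, by linarith, a5⟩
  have hcz : IsCompact (Bz z) := polarRect_compact _ _ _ _
  have hczz : IsCompact (Bzz z ζ) := polarRect_compact _ _ _ _
  set V := (dA (Bz z)).toReal with hV
  have hVl : (1 - r) ^ 2 / 4 ≤ V := by
    rw [hV, hBz, dA_polar (by linarith) (by linarith) (by nlinarith) (by linarith)]
    have : Real.pi⁻¹ * ((theta z + Real.pi * (1 - r) - theta z) * (((1 - (1 - r) / 2)^2 - r ^ 2) / 2))
      = (1 - r) * (((1 - (1 - r) / 2)^2 - r ^ 2) / 2) := by field_simp; ring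
    rw [this]
    nlinarith [mul_nonneg (mul_self_nonneg (1 - r)) (by linarith : (0:ℝ) ≤ r - 1/2)]
  have hVpos : 0 < V := lt_of_lt_of_le (by have : 0 < 1 - r := by linarith
                                           positivity) hVl
  set C' := K * X * (1 - r) * (1 - r) with hC'
  have hC'pos : 0 < C' := by have : 0 < 1 - r := by linarith
                             positivity
  have hI1 : |∫ w in Bz z, fEx b b w ∂dA| ≤ C' := by
    rw [hBz]
    refine (fEx_int b hb hz2 (by linarith) (by linarith) (by nlinarith) (by linarith)).trans
      (le_of_eq ?_)
    rw [add_sub_cancel_left, ← hK, ← hX, hC']; field_simp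
  have hI2 : |∫ w in Bzz z ζ, fEx b b w ∂dA| ≤ C' := by
    rw [hBzz]
    refine (fEx_int b hb hz2 (by linarith) (by linarith) (by linarith) (by linarith)).trans ?_
    have hle : φ - theta z ≤ Real.pi * (1 - r) := by linarith
    have : 0 < 1 - r := by linarith
    calc _ ≤ Real.pi⁻¹ * ((Real.pi * (1 - r)) * (K * X * (1 - r))) := by gcongr
      _ = C' := by rw [hC']; field_simp
  have hV2 : (dA (Bzz z ζ)).toReal ≤ V :=
    ENNReal.toReal_mono (dA_lt_top_of_isBounded hcz.isBounded).ne (measure_mono hsub)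
  have havg : ‖avg (fun z => (fEx b b z : ℂ)) z‖ ≤ V⁻¹ * C' := by
    rw [avg, avgOn, norm_smul, integral_complex_ofReal, Complex.norm_real, Real.norm_eq_abs,
      Real.norm_eq_abs, abs_of_pos (inv_pos.2 hVpos)]
    gcongr
  set A := avg (fun z => (fEx b b z : ℂ)) z with hA
  have hint : IntegrableOn (fun z => (fEx b b z : ℂ)) (Bzz z ζ) dA := by
    apply integrableOn_of_bdd hczz.isBounded hczz.measurableSet
      (Complex.measurable_ofReal.comp (fEx_meas b)).aestronglyMeasurable 2
    intro x _
    change ‖((fEx b b x : ℝ) : ℂ)‖ ≤ 2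
    rw [Complex.norm_real]; exact fEx_bound_s17 b x
  have hintc : IntegrableOn (fun _ : ℂ => A) (Bzz z ζ) dA :=
    integrableOn_const (dA_lt_top_of_isBounded hczz.isBounded).ne
  unfold wQuot
  rw [integral_sub hint hintc, integral_complex_ofReal, setIntegral_const]
  have hn : ‖((∫ w in Bzz z ζ, fEx b b w ∂dA : ℝ) : ℂ) - dA.real (Bzz z ζ) • A‖ ≤ 2 * C' := by
    refine (norm_sub_le _ _).trans ?_
    rw [Complex.norm_real, norm_smul, Real.norm_eq_abs, Real.norm_eq_abs,
      abs_of_nonneg measureReal_nonneg]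
    have : dA.real (Bzz z ζ) * ‖A‖ ≤ V * (V⁻¹ * C') := by
      gcongr
      exact hV2
    rw [← mul_assoc, mul_inv_cancel₀ hVpos.ne', one_mul] at this
    linarith
  calc _ ≤ V⁻¹ * (2 * C') := by gcongr
    _ ≤ ((1 - r) ^ 2 / 4)⁻¹ * (2 * C') := by
        have : 0 < 1 - r := by linarith
        gcongr
    _ = _ := by
        have : 1 - r ≠ 0 := by linarith
        rw [hC']; field_simp; ring

theorem fEx_vwmo (b : ℝ) (hb : 0 < b) : IsVWMO (fun z => (fEx b b z : ℂ)) := by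
  intro ε hε
  have hK : 0 < 8 * ((b + 3) / b) := by positivity
  obtain ⟨r₀, h1, h2⟩ := small_rpow b hb (ε / (8 * ((b + 3) / b))) (by positivity)
  refine ⟨r₀, h1.2, fun z hz hr ζ hζ => ?_⟩
  refine (wQuot_bound b hb z hz (h1.1.trans hr) ζ hζ).trans ?_
  have := h2 _ hr hz
  rwa [le_div_iff₀ hK, mul_comm] at this

theorem tanh_half : 1 / 2 < Real.tanh 1 := by
  rw [Real.tanh_eq, Real.exp_neg]
  have h := Real.exp_one_gt_d9
  have hi : (Real.exp 1)⁻¹ < 1 / 2 := by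
    rw [one_div]; apply inv_strictAnti₀ <;> linarith
  have hi0 : 0 < (Real.exp 1)⁻¹ := by positivity
  rw [div_lt_div_iff₀ (by norm_num) (by positivity)]
  linarith

theorem Dball_subset (z : ℂ) (hz : ‖z‖ < 1) :
    Dball z ⊆ Metric.ball z (3 / (1 - Real.tanh 1) * (1 - ‖z‖)) := by
  rintro w ⟨hw, h⟩
  have ht := Real.tanh_lt_one 1
  have ht2 := tanh_half
  rw [Metric.mem_ball, dist_comm, dist_eq_norm]
  have hlow : 1 - ‖w‖ * ‖z‖ ≤ ‖1 - (starRingEnd ℂ) w * z‖ := by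
    have := norm_sub_norm_le (1:ℂ) ((starRingEnd ℂ) w * z)
    rw [norm_mul, RCLike.norm_conj, norm_one] at this
    exact this
  have hpos : 0 < ‖1 - (starRingEnd ℂ) w * z‖ := by
    nlinarith [norm_nonneg w, norm_nonneg z]
  rw [norm_div, div_lt_iff₀ hpos] at h
  have hup : ‖1 - (starRingEnd ℂ) w * z‖ ≤ 2 * (1 - ‖z‖) + ‖z - w‖ := by
    have e : 1 - (starRingEnd ℂ) w * z = ((1 - ‖z‖ ^ 2 : ℝ) : ℂ) + (starRingEnd ℂ) (z - w) * z := by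
      have := Complex.conj_mul' z
      push_cast
      rw [← this, map_sub]; ring
    rw [e]
    refine (norm_add_le _ _).trans ?_
    rw [norm_mul, RCLike.norm_conj, Complex.norm_real, Real.norm_eq_abs,
      abs_of_nonneg (by nlinarith [norm_nonneg z])]
    nlinarith [norm_nonneg z, norm_nonneg (z - w)]
  rw [div_mul_eq_mul_div, lt_div_iff₀ (by linarith)]
  nlinarith [norm_nonneg (z - w)]

theorem dA_Dball (z : ℂ) (hz : ‖z‖ < 1) :
    (dA (Dball z)).toReal ≤ (3 / (1 - Real.tanh 1) * (1 - ‖z‖)) ^ 2 := by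
  have ht := Real.tanh_lt_one 1
  set R := 3 / (1 - Real.tanh 1) * (1 - ‖z‖) with hR
  have hRpos : 0 ≤ R := mul_nonneg (div_nonneg (by norm_num) (by linarith)) (by linarith)
  have h := measure_mono (μ := dA) (Dball_subset z hz)
  have h2 := ENNReal.toReal_mono (dA_lt_top_of_isBounded Metric.isBounded_ball).ne h
  refine h2.trans (le_of_eq ?_)
  rw [dA, Measure.smul_apply, Complex.volume_ball, smul_eq_mul, ENNReal.toReal_mul,
    ENNReal.toReal_mul, ENNReal.toReal_inv, ENNReal.toReal_ofReal Real.pi_pos.le,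
    ENNReal.toReal_pow, ENNReal.toReal_ofReal hRpos]
  have := Real.pi_ne_zero
  simp only [ENNReal.coe_toReal, NNReal.coe_real_pi]
  field_simp

theorem polar_subset_Dball (z : ℂ) (hz : ‖z‖ < 1) (hz2 : 1 / 2 ≤ ‖z‖) :
    polarRect ‖z‖ (‖z‖ + (1 - ‖z‖) / 4) z.arg (z.arg + (1 - ‖z‖) / 4) ⊆ Dball z := by
  rintro w ⟨ρ, φ, h1, h2, h3, h4, rfl⟩
  set r := ‖z‖ with hr
  have hn : ‖(ρ : ℂ) * Complex.exp ((φ : ℂ) * Complex.I)‖ = ρ := by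
    rw [norm_mul, Complex.norm_exp_ofReal_mul_I, Complex.norm_of_nonneg (by linarith), mul_one]
  refine ⟨by rw [hn]; linarith, ?_⟩
  set w := (ρ : ℂ) * Complex.exp ((φ : ℂ) * Complex.I) with hw
  have hlow : 1 - ‖w‖ * ‖z‖ ≤ ‖1 - (starRingEnd ℂ) w * z‖ := by
    have := norm_sub_norm_le (1:ℂ) ((starRingEnd ℂ) w * z)
    rw [norm_mul, RCLike.norm_conj, norm_one] at this
    exact this
  rw [hn, ← hr] at hlow
  have hlow2 : 1 - r ≤ ‖1 - (starRingEnd ℂ) w * z‖ := by nlinarith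
  have hnum : ‖z - w‖ ≤ (1 - r) / 2 := by
    have e : z - w = -((r : ℂ) * Complex.exp ((z.arg : ℂ) * Complex.I) *
        (Complex.exp (Complex.I * ((φ - z.arg : ℝ) : ℂ)) - 1)) -
        ((ρ - r : ℝ) : ℂ) * Complex.exp ((φ : ℂ) * Complex.I) := by
      have hz' := Complex.norm_mul_exp_arg_mul_I z
      have : Complex.exp ((φ : ℂ) * Complex.I) = Complex.exp ((z.arg : ℂ) * Complex.I) *
          Complex.exp (Complex.I * ((φ - z.arg : ℝ) : ℂ)) := by
        rw [← Complex.exp_add]; congr 1; push_cast; ring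
      rw [mul_sub, mul_assoc, ← this, mul_one, hr, hz', hw]
      push_cast; ring
    rw [e]
    refine (norm_sub_le _ _).trans ?_
    rw [norm_neg, norm_mul, norm_mul, norm_mul, Complex.norm_exp_ofReal_mul_I,
      Complex.norm_exp_ofReal_mul_I, Complex.norm_of_nonneg (by linarith),
      Complex.norm_of_nonneg (by linarith)]
    have h5 := Real.norm_exp_I_mul_ofReal_sub_one_le (x := φ - z.arg)
    rw [Real.norm_eq_abs, abs_of_nonneg (by linarith)] at h5
    nlinarith [norm_nonneg (Complex.exp (Complex.I * ((φ - z.arg : ℝ) : ℂ)) - 1)]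
  rw [norm_div, div_lt_iff₀ (by linarith)]
  have := tanh_half
  nlinarith

theorem meanOsc_bound (b : ℝ) (hb : 0 < b) (z : ℂ) (hz : ‖z‖ < 1) (hz2 : 1 / 2 ≤ ‖z‖)
    (hX : ((b + 3) / b) * (1 - ‖z‖) ^ b ≤ 1 / 40) :
    1 / (128 * Real.pi * (3 / (1 - Real.tanh 1)) ^ 2) ≤ meanOsc1 (fEx b b) z := by
  have hpi := Real.pi_pos
  have ht := Real.tanh_lt_one 1
  set K := 3 / (1 - Real.tanh 1) with hK
  have hKpos : 0 < K := div_pos (by norm_num) (by linarith)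
  set r := ‖z‖ with hr
  set Q := polarRect r (r + (1 - r) / 4) z.arg (z.arg + (1 - r) / 4) with hQ
  have hQD : Q ⊆ Dball z := polar_subset_Dball z hz hz2
  have hDb : Bornology.IsBounded (Dball z) := Metric.isBounded_ball.subset (Dball_subset z hz)
  have hDfin := dA_lt_top_of_isBounded hDb
  have hQc : IsCompact Q := polarRect_compact _ _ _ _
  set a := avg1 (fEx b b) z with ha
  set V := (dA (Dball z)).toReal with hV
  have ha2 : |a| ≤ 2 := by
    have h : ‖∫ w in Dball z, fEx b b w ∂dA‖ ≤ 2 * V :=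
      norm_setIntegral_le_of_norm_le_const hDfin (fun x _ => fEx_bound_s17 b x)
    rw [ha, avg1, abs_mul, abs_inv, abs_of_nonneg (a := (dA (Dball z)).toReal) ENNReal.toReal_nonneg]
    rw [← hV]
    rcases eq_or_lt_of_le (ENNReal.toReal_nonneg : 0 ≤ (dA (Dball z)).toReal) with h0 | h0
    · rw [← hV] at h0; rw [← h0]; simp
    · rw [← hV] at h0
      rw [inv_mul_le_iff₀ h0]
      rw [Real.norm_eq_abs] at h
      linarith
  set h2 : ℝ → ℝ := fun ρ => (1 / 4 - 1 / 4 * Real.sin (2 * (1 / (1 - ρ) ^ b) + Real.pi / 2)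
    - a / 2 * Real.sin (1 * (1 / (1 - ρ) ^ b) + 0)) / ρ with hh2
  have hm2 : Measurable h2 := by rw [hh2]; fun_prop
  have hnorm : ∀ w ∈ Q, r ≤ ‖w‖ ∧ ‖w‖ < 1 := by
    rintro w ⟨ρ, φ, a1, a2, a3, a4, rfl⟩
    have hn : ‖(ρ : ℂ) * Complex.exp ((φ : ℂ) * Complex.I)‖ = ρ := by
      rw [norm_mul, Complex.norm_exp_ofReal_mul_I, Complex.norm_of_nonneg (by linarith), mul_one]
    rw [hn]; exact ⟨a1, by linarith⟩
  have hfm : AEStronglyMeasurable (fun w => |fEx b b w - a|) dA := by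
    have := fEx_meas b
    exact ((this.sub_const a).norm).aestronglyMeasurable
  have hfb : ∀ w, ‖|fEx b b w - a|‖ ≤ 4 := by
    intro w
    rw [Real.norm_eq_abs, abs_abs]
    have := abs_sub (fEx b b w) a
    linarith [fEx_bound_s17 b w]
  have hiD : IntegrableOn (fun w => |fEx b b w - a|) (Dball z) dA :=
    Measure.integrableOn_of_bounded (M := 4) hDfin.ne hfm (Filter.Eventually.of_forall hfb)
  have hiQ := hiD.mono_set hQD
  have hi2 : IntegrableOn (fun w : ℂ => h2 ‖w‖) Q dA := by
    apply integrableOn_of_bdd hQc.isBounded hQc.measurableSet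
      (hm2.comp measurable_norm).aestronglyMeasurable 3
    intro w hw
    have hw1 := (hnorm w hw).1
    have hw0 : 0 < ‖w‖ := by linarith
    simp only [hh2, Function.comp_apply]
    rw [Real.norm_eq_abs, abs_div, abs_of_pos hw0, div_le_iff₀ hw0]
    set s1 := Real.sin (2 * (1 / (1 - ‖w‖) ^ b) + Real.pi / 2)
    set s2 := Real.sin (1 * (1 / (1 - ‖w‖) ^ b) + 0)
    have e1 : |s1| ≤ 1 := Real.abs_sin_le_one _
    have e2 : |s2| ≤ 1 := Real.abs_sin_le_one _
    have e3 : |a / 2 * s2| ≤ 1 := by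
      rw [abs_mul, abs_div, abs_two]
      calc _ ≤ 2 / 2 * 1 := by gcongr
        _ = (1:ℝ) := by norm_num
    rw [abs_le] at *
    constructor <;> linarith [e1.1, e1.2, e3.1, e3.2]
  have hmono : ∫ w in Q, h2 ‖w‖ ∂dA ≤ ∫ w in Q, |fEx b b w - a| ∂dA := by
    apply setIntegral_mono_on hi2 hiQ hQc.measurableSet
    intro w hw
    obtain ⟨hw1, hw2⟩ := hnorm w hw
    have hw0 : 0 < ‖w‖ := by linarith
    have hbd := fEx_bound_s17 b w
    have hf : fEx b b w = Real.sin (1 / (1 - ‖w‖) ^ b) / ‖w‖ := by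
      rw [fEx_eq, gEx, if_neg (by push Not; linarith)]; ring
    have step : (fEx b b w - a) * (fEx b b w / 2) ≤ |fEx b b w - a| := by
      refine (le_abs_self _).trans ?_
      rw [abs_mul, abs_div, abs_two]
      have : |fEx b b w| / 2 ≤ 1 := by linarith
      exact mul_le_of_le_one_right (abs_nonneg _) this
    refine le_trans ?_ step
    simp only [hh2]
    rw [hf, Real.sin_add_pi_div_two, Real.cos_two_mul, one_mul, add_zero]
    set s := Real.sin (1 / (1 - ‖w‖) ^ b)
    have hcs : Real.cos (1 / (1 - ‖w‖) ^ b) ^ 2 = 1 - s ^ 2 := by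
      rw [Real.cos_sq']
    rw [hcs]
    have h3 : s ^ 2 / ‖w‖ ≤ (s / ‖w‖) ^ 2 := by
      rw [div_pow]
      apply div_le_div_of_nonneg_left (sq_nonneg s) (by positivity)
      nlinarith
    have e1 : (1 / 4 - 1 / 4 * (2 * (1 - s ^ 2) - 1) - a / 2 * s) / ‖w‖
       = (s ^ 2 / ‖w‖) / 2 - a / 2 * (s / ‖w‖) := by ring
    rw [e1]
    nlinarith
  have hI : ∫ w in Q, h2 ‖w‖ ∂dA = Real.pi⁻¹ * ((1 - r) / 4 * ∫ ρ in Icc r (r + (1 - r) / 4),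
      ρ * h2 ρ) := by
    rw [hQ, polar_dA h2 (by linarith) (by linarith) (by linarith [Real.pi_gt_three])]
    rw [add_sub_cancel_left]
  have hsplit : ∫ ρ in Icc r (r + (1 - r) / 4), ρ * h2 ρ =
      (1 - r) / 16 - 1 / 4 * (∫ ρ in Icc r (r + (1 - r) / 4),
        Real.sin (2 * (1 / (1 - ρ) ^ b) + Real.pi / 2)) -
      a / 2 * ∫ ρ in Icc r (r + (1 - r) / 4), Real.sin (1 * (1 / (1 - ρ) ^ b) + 0) := by
    have his : ∀ k c : ℝ, IntegrableOn (fun ρ : ℝ => Real.sin (k * (1 / (1 - ρ) ^ b) + c))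
        (Icc r (r + (1 - r) / 4)) := by
      intro k c
      refine Measure.integrableOn_of_bounded (M := 1) (by simp) ?_
        (Filter.Eventually.of_forall fun x => Real.abs_sin_le_one _)
      exact (by fun_prop : Measurable _).aestronglyMeasurable
    have e : ∫ ρ in Icc r (r + (1 - r) / 4), ρ * h2 ρ = ∫ ρ in Icc r (r + (1 - r) / 4),
        (1 / 4 - 1 / 4 * Real.sin (2 * (1 / (1 - ρ) ^ b) + Real.pi / 2)
    - a / 2 * Real.sin (1 * (1 / (1 - ρ) ^ b) + 0)) := by
      apply setIntegral_congr_fun measurableSet_Icc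
      intro ρ hρ
      have : ρ ≠ 0 := by intro h''; linarith [hρ.1]
      simp only [hh2]
      exact mul_div_cancel₀ _ this
    have hic : IntegrableOn (fun _ : ℝ => (1/4 : ℝ)) (Icc r (r + (1 - r) / 4)) :=
      integrableOn_const (by simp)
    have hi3 : IntegrableOn (fun ρ : ℝ => 1 / 4 -
        1 / 4 * Real.sin (2 * (1 / (1 - ρ) ^ b) + Real.pi / 2)) (Icc r (r + (1 - r) / 4)) :=
      hic.sub ((his _ _).const_mul _)
    rw [e, integral_sub hi3 ((his _ _).const_mul _),
      integral_sub hic ((his _ _).const_mul _), integral_const_mul, integral_const_mul,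
      setIntegral_const, Real.volume_real_Icc_of_le (by linarith)]
    simp only [smul_eq_mul]
    ring
  have o1 := osc b 2 (Real.pi / 2) hb (by norm_num) (r₁ := r) (r₂ := r + (1 - r) / 4)
    (by linarith) (by linarith) (by linarith)
  have o2 := osc b 1 0 hb le_rfl (r₁ := r) (r₂ := r + (1 - r) / 4)
    (by linarith) (by linarith) (by linarith)
  set I1 := ∫ ρ in Icc r (r + (1 - r) / 4), Real.sin (2 * (1 / (1 - ρ) ^ b) + Real.pi / 2)
  set I2 := ∫ ρ in Icc r (r + (1 - r) / 4), Real.sin (1 * (1 / (1 - ρ) ^ b) + 0)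
  have hr1 : 0 < 1 - r := by linarith
  have oX : ((b + 3) / b) * (1 - r) ^ b * (1 - r) ≤ 1 / 40 * (1 - r) := by gcongr
  have hlow : (1 - r) / 32 ≤ ∫ ρ in Icc r (r + (1 - r) / 4), ρ * h2 ρ := by
    rw [hsplit]
    have q1 := (abs_le.1 (o1.trans oX)).2
    have q2 : a / 2 * I2 ≤ 1 / 40 * (1 - r) := by
      refine (le_abs_self _).trans ?_
      rw [abs_mul, abs_div, abs_two]
      have := o2.trans oX
      calc |a| / 2 * |I2| ≤ 1 * (1 / 40 * (1 - r)) := by gcongr; linarith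
        _ = _ := one_mul _
    linarith
  have hmain : Real.pi⁻¹ * ((1 - r) / 4 * ((1 - r) / 32)) ≤ ∫ w in Dball z, |fEx b b w - a| ∂dA := by
    calc _ ≤ Real.pi⁻¹ * ((1 - r) / 4 * ∫ ρ in Icc r (r + (1 - r) / 4), ρ * h2 ρ) := by gcongr
      _ = _ := hI.symm
      _ ≤ _ := hmono
      _ ≤ _ := setIntegral_mono_set hiD (Filter.Eventually.of_forall fun x => abs_nonneg _)
            (Filter.Eventually.of_forall hQD)
  have hpos : 0 < Real.pi⁻¹ * ((1 - r) / 4 * ((1 - r) / 32)) := by positivity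
  have hVpos : 0 < V := by
    rcases eq_or_lt_of_le (ENNReal.toReal_nonneg : 0 ≤ (dA (Dball z)).toReal) with h0 | h0
    · exfalso
      have : dA (Dball z) = 0 := by
        rcases (ENNReal.toReal_eq_zero_iff _).1 h0.symm with h | h
        · exact h
        · exact absurd h hDfin.ne
      rw [Measure.restrict_eq_zero.2 this] at hmain
      simp only [integral_zero_measure] at hmain
      linarith
    · exact h0
  have hVle : V ≤ (K * (1 - r)) ^ 2 := dA_Dball z hz
  unfold meanOsc1
  calc _ = ((K * (1 - r)) ^ 2)⁻¹ * (Real.pi⁻¹ * ((1 - r) / 4 * ((1 - r) / 32))) := by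
        field_simp; norm_num
    _ ≤ V⁻¹ * ∫ w in Dball z, |fEx b b w - a| ∂dA := by gcongr


/-- For `b = β > 0`, the example symbol `f = fEx b b`
(`f(re^{iθ}) = (1/r) sin(1/(1-r)^b)` for `r ≥ 1/2`) is bounded on `𝔻` and satisfies the
VWMO condition, but does not belong to `VMO¹`: there are `C > 0` and `r₀ ∈ (0,1)` with
`(1/|D(z,1)|) ∫_{D(z,1)} |f(ξ) - f̂₁(z)| dA(ξ) ≥ C` for all `z ∈ 𝔻` with `|z| ≥ r₀`. -/
theorem example_bounded_vwmo_not_vmo (b : ℝ) (hb : 0 < b) :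
    (∃ M : ℝ, ∀ z ∈ unitDisc, |fEx b b z| ≤ M) ∧
    IsVWMO (fun z => (fEx b b z : ℂ)) ∧
    ∃ C > (0:ℝ), ∃ r₀ ∈ Set.Ioo (0:ℝ) 1, ∀ z ∈ unitDisc, r₀ ≤ ‖z‖ →
      C ≤ meanOsc1 (fEx b b) z := by
  refine ⟨⟨2, fun z _ => fEx_bound_s17 b z⟩, fEx_vwmo b hb, ?_⟩
  have hK : 0 < (b + 3) / b := by positivity
  have ht := Real.tanh_lt_one 1
  have hK' : 0 < 3 / (1 - Real.tanh 1) := div_pos (by norm_num) (by linarith)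
  have hpi := Real.pi_pos
  obtain ⟨r₀, h1, h2⟩ := small_rpow b hb (1 / 40 / ((b + 3) / b)) (by positivity)
  refine ⟨1 / (128 * Real.pi * (3 / (1 - Real.tanh 1)) ^ 2), by positivity, r₀,
    ⟨by linarith [h1.1], h1.2⟩, fun z hz hr => ?_⟩
  apply meanOsc_bound b hb z hz (h1.1.trans hr)
  have := h2 _ hr hz
  rwa [le_div_iff₀ hK, mul_comm] at this
end
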